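/- Suppose F satisfies (G1) and the Perron–Frobenius operator P_σ of the base shift satisfies the Lasota–Yorke inequality ‖P_σ^n φ‖_θ ≤ θ^n ‖φ‖_θ + C₂‖φ‖_∞ for all d_θ-Lipschitz φ and n ≥ 1. Then, with α₁ = max{θ, α} and B₄ = C₂ + 1/(1−α), for every μ ∈ S^∞ and every n ≥ 1 it holds ‖F^{*n}μ‖_{S^∞} ≤ 2α₁^n ‖μ‖_{S^∞} + B₄ ‖μ‖_∞. -/

import Mathlib

open MeasureTheory ENNReal Set

namespace RDS

/-- The one-sided subshift of finite type `Σ_A^+` determined by the 0-1 matrix `A`. -/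
abbrev SigmaA (N : ℕ) (A : Fin N → Fin N → Bool) :=
  {x : ℕ → Fin N // ∀ i, A (x i) (x (i + 1)) = true}

variable {N : ℕ} {A : Fin N → Fin N → Bool}

/-- The shift map `σ` on `Σ_A^+`. -/
def shift (x : SigmaA N A) : SigmaA N A :=
  ⟨fun i => x.val (i + 1), fun i => x.prop (i + 1)⟩

/-- Aperiodicity of a 0-1 matrix: some power has all entries positive. -/
def Aperiodic (A : Fin N → Fin N → Bool) : Prop :=
  ∃ k : ℕ, 0 < k ∧ ∀ i j,
    0 < ((Matrix.of fun a b => if A a b then (1 : ℕ) else 0) ^ k) i j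

/-- The metric `d_θ(x,y) = Σ_i θ^i (1 - δ(x_i, y_i))` on `Σ_A^+`. -/
noncomputable def dTheta (θ : ℝ) (x y : SigmaA N A) : ℝ :=
  ∑' i : ℕ, θ ^ i * (if x.val i = y.val i then (0 : ℝ) else 1)

/-- Cylinder sets of `Σ_A^+`. -/
def cylinder (n : ℕ) (w : Fin (n + 1) → Fin N) : Set (SigmaA N A) :=
  {x | ∀ i : Fin (n + 1), x.val i = w i}

/-- `m` is a Markov measure on `Σ_A^+` compatible with `A`: it is given on
cylinders by a stochastic matrix `P` (vanishing where `A` vanishes) and a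
stationary probability vector `p`. -/
def IsMarkov (m : Measure (SigmaA N A)) : Prop :=
  ∃ (p : Fin N → ℝ≥0∞) (P : Fin N → Fin N → ℝ≥0∞),
    (∑ i, p i = 1) ∧ (∀ i, ∑ j, P i j = 1) ∧ (∀ j, ∑ i, p i * P i j = p j) ∧
    (∀ i j, A i j = false → P i j = 0) ∧
    ∀ (n : ℕ) (w : Fin (n + 1) → Fin N),
      m (cylinder n w) = p (w 0) * ∏ i : Fin n, P (w i.castSucc) (w i.succ)

/-- `σ_i⁻¹(γ)`: the sequence `γ` with the symbol `i` prepended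
(defined when `A i γ₀ = 1`), i.e. the inverse branch of the restriction `σ_i`
of `σ` to the cylinder `[i]`. -/
def prepend (i : Fin N) (x : SigmaA N A) (h : A i (x.val 0) = true) : SigmaA N A :=
  ⟨fun n => match n with
    | 0 => i
    | Nat.succ k => x.val k,
   fun j => match j with
    | 0 => h
    | Nat.succ k => x.prop k⟩

/-- `f` is `L`-Lipschitz with respect to the distance function `d`. -/
def LipWithD {X : Type*} (d : X → X → ℝ) (L : ℝ) (f : X → ℝ) : Prop :=
  ∀ x y, |f x - f y| ≤ L * d x y

/-- `f` is Lipschitz with respect to the distance function `d`. -/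
def LipD {X : Type*} (d : X → X → ℝ) (f : X → ℝ) : Prop :=
  ∃ L : ℝ, LipWithD d L f

/-- The best Lipschitz constant of `f` with respect to `d` (valued in `ℝ≥0∞`). -/
noncomputable def lipConst {X : Type*} (d : X → X → ℝ) (f : X → ℝ) : ℝ≥0∞ :=
  ⨆ (x : X) (y : X), ENNReal.ofReal (|f x - f y| / d x y)

/-- The sup norm of `f` (valued in `ℝ≥0∞`). -/
noncomputable def supNormE {X : Type*} (f : X → ℝ) : ℝ≥0∞ :=
  ⨆ x : X, ENNReal.ofReal |f x|

/-- The norm `‖f‖_θ = ‖f‖_∞ + Lip_d(f)`. -/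
noncomputable def thetaNorm {X : Type*} (d : X → X → ℝ) (f : X → ℝ) : ℝ≥0∞ :=
  supNormE f + lipConst d f

/-- The Perron-Frobenius operator duality characterizing `P_σ`:
`∫ P_σ(φ) · ψ dm = ∫ φ · (ψ ∘ σ) dm` for integrable `φ` and bounded measurable `ψ`. -/
def IsPerronFrobenius (m : Measure (SigmaA N A))
    (Pσ : (SigmaA N A → ℝ) → SigmaA N A → ℝ) : Prop :=
  ∀ φ ψ : SigmaA N A → ℝ, Integrable φ m → Measurable ψ → (∃ C, ∀ x, |ψ x| ≤ C) →
    ∫ x, Pσ φ x * ψ x ∂m = ∫ x, φ x * ψ (shift x) ∂m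

/-- Spectral gap for `P_σ` on `d_θ`-Lipschitz functions with constants `D`, `r`:
`‖P_σ^n φ‖_θ ≤ D r^n ‖φ‖_θ` for all `n` and all `d_θ`-Lipschitz `φ` with
`∫ φ dm = 0`. -/
def HasGap (m : Measure (SigmaA N A)) (θ : ℝ)
    (Pσ : (SigmaA N A → ℝ) → SigmaA N A → ℝ) (D r : ℝ) : Prop :=
  ∀ φ : SigmaA N A → ℝ, LipD (dTheta θ) φ → (∫ x, φ x ∂m) = 0 →
    ∀ n : ℕ, thetaNorm (dTheta θ) (Pσ^[n] φ) ≤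
      ENNReal.ofReal (D * r ^ n) * thetaNorm (dTheta θ) φ

/-- `Jm i` is the Jacobian `J_{m,σ_i}` of `m` with respect to the branch `σ_i`
(the restriction of `σ` to the cylinder `[i]`): `m (σ_i(E)) = ∫_E J_{m,σ_i} dm`
for every measurable `E` (intersected with `[i]`). -/
def IsJacobian (m : Measure (SigmaA N A)) (Jm : Fin N → SigmaA N A → ℝ) : Prop :=
  ∀ (i : Fin N) (E : Set (SigmaA N A)), MeasurableSet E →
    m {γ : SigmaA N A | ∃ h : A i (γ.val 0) = true, prepend i γ h ∈ E} =
      ∫⁻ x in E ∩ {x : SigmaA N A | x.val 0 = i}, ENNReal.ofReal (Jm i x) ∂m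

variable {K : Type*} [MetricSpace K] [MeasurableSpace K]

/-- The Wasserstein-Kantorovich like distance `W(ν₁,ν₂)`: the supremum of
`|∫ g dν₁ - ∫ g dν₂|` over `g : K → ℝ` with `Lip(g) ≤ 1` and `‖g‖_∞ ≤ 1`.
Applied with `ν₂ = 0` it gives the norm `‖ν₁‖_W`; applied to the two parts of a
decomposition of a signed measure it gives its `‖·‖_W` norm. -/
noncomputable def wDist (ν₁ ν₂ : Measure K) : ℝ≥0∞ :=
  ⨆ g : {g : K → ℝ // LipschitzWith 1 g ∧ ∀ z, |g z| ≤ 1},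
    ENNReal.ofReal |∫ z, g.val z ∂ν₁ - ∫ z, g.val z ∂ν₂|

/-- The skew product `F(x,z) = (σ(x), G(x,z))`. -/
def skew (G : SigmaA N A × K → K) (p : SigmaA N A × K) : SigmaA N A × K :=
  (shift p.1, G p)

/-- The transfer operator `F^* μ (E) = μ (F⁻¹ E)` acting on signed measures. -/
noncomputable def transfer (G : SigmaA N A × K → K)
    (μ : SignedMeasure (SigmaA N A × K)) : SignedMeasure (SigmaA N A × K) :=
  μ.map (skew G)

/-- Condition (G1): uniform contraction of the vertical fibers with rate `α`. -/
def CondG1 (G : SigmaA N A × K → K) (α : ℝ) : Prop :=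
  ∀ (x : SigmaA N A) (z₁ z₂ : K), dist (G (x, z₁)) (G (x, z₂)) ≤ α * dist z₁ z₂

/-- Condition (G2): `x ↦ G(x,z)` is `d_θ`-Lipschitz with constant `H`,
uniformly in `z`. -/
def CondG2 (θ : ℝ) (G : SigmaA N A × K → K) (H : ℝ) : Prop :=
  ∀ (z : K) (x y : SigmaA N A), dist (G (x, z)) (G (y, z)) ≤ H * dTheta θ x y

/-- `T` is (the path `γ ↦ μ|_γ` of) a disintegration of `μ` along the vertical
fibers, over the reference measure `m`: `μ(E) = ∫ (μ|_γ)(E ∩ γ) dm(γ)`. -/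
def IsDisint (m : Measure (SigmaA N A)) (μ : Measure (SigmaA N A × K))
    (T : SigmaA N A → Measure K) : Prop :=
  (∀ E : Set (SigmaA N A × K), MeasurableSet E →
      μ E = ∫⁻ γ, T γ {z | (γ, z) ∈ E} ∂m) ∧
  ∀ E : Set K, MeasurableSet E → Measurable fun γ => T γ E

/-- The (essential) `‖·‖_W`-Lipschitz constant of a path of measures,
`|Γ|_θ^ω = ess sup_{γ₁ ≠ γ₂} ‖Γ(γ₁) - Γ(γ₂)‖_W / d_θ(γ₁,γ₂)`. -/
noncomputable def pathLip (m : Measure (SigmaA N A)) (θ : ℝ)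
    (T : SigmaA N A → Measure K) : ℝ≥0∞ :=
  essSup (fun p : SigmaA N A × SigmaA N A =>
    wDist (T p.1) (T p.2) / ENNReal.ofReal (dTheta θ p.1 p.2)) (m.prod m)

/-- The Lipschitz constant `|μ|_θ` of a positive measure: the infimum over
disintegrations `ω` of `μ` of `|μ|_θ^ω`. -/
noncomputable def lipDisint (m : Measure (SigmaA N A)) (θ : ℝ)
    (μ : Measure (SigmaA N A × K)) : ℝ≥0∞ :=
  ⨅ T : {T : SigmaA N A → Measure K // IsDisint m μ T}, pathLip m θ T.val

/-- The fiberwise transfer formula: the path representing `F^*μ` induced by the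
path `T` representing `μ`, i.e.
`γ ↦ Σ_i 1_{σ([i])}(γ) (F_{iγ})_*(T(iγ)) / J_{m,σ_i}(iγ)`. -/
noncomputable def transferPath (G : SigmaA N A × K → K) (Jm : Fin N → SigmaA N A → ℝ)
    (T : SigmaA N A → Measure K) : SigmaA N A → Measure K :=
  fun γ => ∑ i : Fin N, if h : A i (γ.val 0) = true then
      ENNReal.ofReal ((Jm i (prepend i γ h))⁻¹) •
        ((T (prepend i γ h)).map fun z => G (prepend i γ h, z))
    else 0

variable [BorelSpace K] [CompactSpace K] [Nonempty K]

/-- The fiberwise restriction `μ|_γ = π₂_* (φ₁(γ) μ_γ)` of a finite positive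
measure `μ` on `Σ_A^+ × K`, where `({μ_γ}_γ, φ₁ m)` is the Rokhlin
disintegration of `μ` along the vertical fibers and `φ₁ = d(π₁_*μ)/dm`. -/
noncomputable def fiberR (m : Measure (SigmaA N A))
    (μ : Measure (SigmaA N A × K)) (γ : SigmaA N A) : Measure K := by
  by_cases h : IsFiniteMeasure μ
  · haveI := h
    exact (μ.fst.rnDeriv m γ) • μ.condKernel γ
  · exact 0

/-- The norm `‖μ‖_∞ = ess sup_γ ‖μ|_γ‖_W` of a signed measure written as a
difference `μ = μ₁ - μ₂` of positive measures. -/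
noncomputable def infNormPair (m : Measure (SigmaA N A))
    (μ₁ μ₂ : Measure (SigmaA N A × K)) : ℝ≥0∞ :=
  essSup (fun γ => wDist (fiberR m μ₁ γ) (fiberR m μ₂ γ)) m

/-- The marginal density `φ₁ = d(π₁_*μ)/dm` of the signed measure `μ = μ₁ - μ₂`. -/
noncomputable def phiPair (m : Measure (SigmaA N A))
    (μ₁ μ₂ : Measure (SigmaA N A × K)) (γ : SigmaA N A) : ℝ :=
  (μ₁.fst.rnDeriv m γ).toReal - (μ₂.fst.rnDeriv m γ).toReal

/-- Membership in `AB`: both parts are finite with first marginal absolutely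
continuous with respect to `m`. -/
def MemABPair (m : Measure (SigmaA N A)) (μ₁ μ₂ : Measure (SigmaA N A × K)) : Prop :=
  μ₁.fst ≪ m ∧ μ₂.fst ≪ m ∧ IsFiniteMeasure μ₁ ∧ IsFiniteMeasure μ₂

/-- Membership in `S^∞`: `μ ∈ AB`, `‖μ‖_∞ < ∞` and the marginal density `φ₁`
has a `d_θ`-Lipschitz version. -/
def MemSPair (m : Measure (SigmaA N A)) (θ : ℝ)
    (μ₁ μ₂ : Measure (SigmaA N A × K)) : Prop :=
  MemABPair m μ₁ μ₂ ∧ infNormPair m μ₁ μ₂ < ⊤ ∧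
    ∃ ψ : SigmaA N A → ℝ, ψ =ᵐ[m] phiPair m μ₁ μ₂ ∧ LipD (dTheta θ) ψ

/-- `‖φ₁‖_θ`, computed on the best version of the marginal density. -/
noncomputable def thetaNormMu (m : Measure (SigmaA N A)) (θ : ℝ)
    (μ₁ μ₂ : Measure (SigmaA N A × K)) : ℝ≥0∞ :=
  ⨅ ψ : {ψ : SigmaA N A → ℝ // ψ =ᵐ[m] phiPair m μ₁ μ₂}, thetaNorm (dTheta θ) ψ.val

/-- The norm `‖μ‖_{S^∞} = ‖φ₁‖_θ + ‖μ‖_∞`. -/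
noncomputable def sNormPair (m : Measure (SigmaA N A)) (θ : ℝ)
    (μ₁ μ₂ : Measure (SigmaA N A × K)) : ℝ≥0∞ :=
  thetaNormMu m θ μ₁ μ₂ + infNormPair m μ₁ μ₂

/-- Positive part of a signed measure. -/
noncomputable def jPos {X : Type*} [MeasurableSpace X] (μ : SignedMeasure X) : Measure X :=
  μ.toJordanDecomposition.posPart

/-- Negative part of a signed measure. -/
noncomputable def jNeg {X : Type*} [MeasurableSpace X] (μ : SignedMeasure X) : Measure X :=
  μ.toJordanDecomposition.negPart

/-- Membership in `AB` for signed measures. -/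
def MemAB (m : Measure (SigmaA N A)) (μ : SignedMeasure (SigmaA N A × K)) : Prop :=
  MemABPair m (jPos μ) (jNeg μ)

/-- Membership in `S^∞` for signed measures. -/
def MemS (m : Measure (SigmaA N A)) (θ : ℝ) (μ : SignedMeasure (SigmaA N A × K)) : Prop :=
  MemSPair m θ (jPos μ) (jNeg μ)

/-- `‖μ‖_∞` for signed measures. -/
noncomputable def infNorm (m : Measure (SigmaA N A))
    (μ : SignedMeasure (SigmaA N A × K)) : ℝ≥0∞ :=
  infNormPair m (jPos μ) (jNeg μ)

/-- `‖μ‖_{S^∞}` for signed measures. -/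
noncomputable def sNorm (m : Measure (SigmaA N A)) (θ : ℝ)
    (μ : SignedMeasure (SigmaA N A × K)) : ℝ≥0∞ :=
  sNormPair m θ (jPos μ) (jNeg μ)

/-- `‖φ₁‖_∞` of the marginal density of a signed measure. -/
noncomputable def phiSup (m : Measure (SigmaA N A))
    (μ : SignedMeasure (SigmaA N A × K)) : ℝ≥0∞ :=
  essSup (fun γ => ENNReal.ofReal |phiPair m (jPos μ) (jNeg μ) γ|) m

/-! For a bounded measurable `f` put `u_{μ,f}(γ) = ∫ f(γ, z) dμ|_γ(z)`. Integrating over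
`S × K` shows that `u_{F^{*n}μ, f} = P_σ^n u_{μ, f ∘ F^n}` almost everywhere, and `P_σ` contracts
`L^∞(m)` since `σ` preserves `m`. If `f(γ, z) = g(z)` with `g` a test function of `‖·‖_W`, then
`f ∘ F^n` is on each fiber a constant of modulus at most `1` plus a function which is `α^n` times a
test function, because `diam K ≤ 1`; taking the supremum over a countable dense set of `g` yields
`‖F^{*n}μ‖_∞ ≤ α^n ‖μ‖_∞ + ‖φ₁‖_∞`. With `f = 1` the same identity says that the marginal density of
`F^{*n}μ` is `P_σ^n φ₁`, to which the Lasota–Yorke inequality of the base applies. Finally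
`‖φ₁‖_∞ ≤ ‖μ‖_∞`, because the constant `1` is a test function. -/

open scoped NNReal

section LipschitzNorms

variable {X : Type*} {d : X → X → ℝ} {f : X → ℝ}

theorem LipD.of_lipConst_ne_top (hd : ∀ x y, 0 ≤ d x y) (hd0 : ∀ x y, d x y = 0 → x = y)
    (hf : lipConst d f ≠ ⊤) : LipD d f := by
  refine ⟨(lipConst d f).toReal, fun x y => ?_⟩
  rcases (hd x y).eq_or_lt with hxy | hxy
  · obtain rfl := hd0 x y hxy.symm
    simp [← hxy]
  · rw [← div_le_iff₀ hxy, ← ofReal_le_iff_le_toReal hf]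
    exact le_iSup₂ (f := fun x y => ENNReal.ofReal (|f x - f y| / d x y)) x y

theorem LipD.bounded {D : ℝ} (hd : ∀ x y, 0 ≤ d x y) (hD : ∀ x y, d x y ≤ D) (hf : LipD d f) :
    ∃ C, ∀ x, |f x| ≤ C := by
  obtain ⟨L, hL⟩ := hf
  rcases isEmpty_or_nonempty X with h | ⟨⟨x₀⟩⟩
  · exact ⟨0, fun x => h.elim x⟩
  · refine ⟨|f x₀| + |L| * D, fun x => ?_⟩
    have hLD : L * d x x₀ ≤ |L| * D :=
      mul_le_mul (le_abs_self L) (hD x x₀) (hd x x₀) (abs_nonneg L)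
    linarith [hL x x₀, abs_sub_abs_le_abs_sub (f x) (f x₀)]

theorem LipD.lipConst_lt_top (hd : ∀ x y, 0 ≤ d x y) (hf : LipD d f) : lipConst d f < ⊤ := by
  obtain ⟨L, hL⟩ := hf
  refine (iSup₂_le fun x y => ENNReal.ofReal_le_ofReal ?_).trans_lt
    (ofReal_lt_top (r := |L|))
  exact div_le_of_le_mul₀ (hd x y) (abs_nonneg L)
    ((hL x y).trans (mul_le_mul_of_nonneg_right (le_abs_self L) (hd x y)))

theorem supNormE_lt_top (hf : ∃ C, ∀ x, |f x| ≤ C) : supNormE f < ⊤ := by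
  obtain ⟨C, hC⟩ := hf
  exact (iSup_le fun x => ENNReal.ofReal_le_ofReal (hC x)).trans_lt ofReal_lt_top

theorem thetaNorm_comp_le (hd : ∀ x y, 0 ≤ d x y) {h : ℝ → ℝ} (hh : LipschitzWith 1 h)
    (h0 : h 0 = 0) : thetaNorm d (h ∘ f) ≤ thetaNorm d f := by
  have hdist (a b : ℝ) : |h a - h b| ≤ |a - b| := by simpa [Real.dist_eq] using hh.dist_le_mul a b
  refine add_le_add (iSup_mono fun x => ENNReal.ofReal_le_ofReal ?_)
    (iSup₂_mono fun x y => ENNReal.ofReal_le_ofReal ?_)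
  · simpa [h0] using hdist (f x) 0
  · exact div_le_div_of_nonneg_right (hdist _ _) (hd x y)

theorem exists_ae_eq_supNormE_le_eLpNorm_top [MeasurableSpace X] (m : Measure X)
    (hd : ∀ x y, 0 ≤ d x y) (f : X → ℝ) :
    ∃ g, g =ᵐ[m] f ∧ thetaNorm d g ≤ thetaNorm d f ∧ supNormE g ≤ eLpNorm f ∞ m := by
  rcases eq_or_ne (eLpNorm f ∞ m) ⊤ with htop | htop
  · exact ⟨f, .rfl, le_rfl, le_top.trans_eq htop.symm⟩
  set M := (eLpNorm f ∞ m).toReal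
  have hM : 0 ≤ M := toReal_nonneg
  have hfM : ∀ᵐ x ∂m, |f x| ≤ M := by
    filter_upwards [ae_le_eLpNormEssSup (f := f) (μ := m)] with x hx
    rw [← eLpNorm_exponent_top, Real.enorm_eq_ofReal_abs] at hx
    exact (ofReal_le_iff_le_toReal htop).1 hx
  refine ⟨(fun t => max (-M) (min t M)) ∘ f, ?_,
    thetaNorm_comp_le hd ((LipschitzWith.id.min_const M).const_max (-M)) (by simp [hM]),
    iSup_le fun x => (ofReal_le_iff_le_toReal htop).2 (abs_le.2 ⟨?_, ?_⟩)⟩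
  · filter_upwards [hfM] with x hx
    simp [(abs_le.1 hx).1, (abs_le.1 hx).2]
  · exact le_max_left _ _
  · exact max_le (by linarith) (min_le_right _ _)

/-- The Lasota–Yorke inequality with rate `θ` and constant `C` for the iterates of an operator `P`
on real functions, in the norms `thetaNorm d` and `supNormE`. -/
def HasLasotaYorke (d : X → X → ℝ) (θ C : ℝ) (P : (X → ℝ) → X → ℝ) : Prop :=
  ∀ φ : X → ℝ, LipD d φ → ∀ n : ℕ, 1 ≤ n →
    thetaNorm d (P^[n] φ) ≤ ENNReal.ofReal (θ ^ n) * thetaNorm d φ + ENNReal.ofReal C * supNormE φ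

theorem HasLasotaYorke.lipD_iterate {D θ C : ℝ} {P : (X → ℝ) → X → ℝ} (hLY : HasLasotaYorke d θ C P)
    (hd : ∀ x y, 0 ≤ d x y) (hd0 : ∀ x y, d x y = 0 → x = y) (hD : ∀ x y, d x y ≤ D)
    (hf : LipD d f) (n : ℕ) : LipD d (P^[n] f) := by
  rcases n.eq_zero_or_pos with rfl | hn
  · exact hf
  have hsup : supNormE f < ⊤ := supNormE_lt_top (hf.bounded hd hD)
  have hlip : lipConst d f < ⊤ := hf.lipConst_lt_top hd
  have hbound := (hLY f hf n hn).trans_lt <| add_lt_top.2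
    ⟨mul_lt_top ofReal_lt_top (add_lt_top.2 ⟨hsup, hlip⟩), mul_lt_top ofReal_lt_top hsup⟩
  exact .of_lipConst_ne_top hd hd0 (add_lt_top.1 hbound).2.ne

end LipschitzNorms

section SymbolicMetric

variable {θ : ℝ}

theorem summable_dTheta (hθ0 : 0 ≤ θ) (hθ1 : θ < 1) (x y : SigmaA N A) :
    Summable fun i : ℕ => θ ^ i * (if x.val i = y.val i then (0 : ℝ) else 1) := by
  refine Summable.of_nonneg_of_le (fun i => ?_) (fun i => ?_)
    (summable_geometric_of_lt_one hθ0 hθ1) <;> split_ifs <;> simp [hθ0]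

theorem dTheta_nonneg (hθ0 : 0 ≤ θ) (x y : SigmaA N A) : 0 ≤ dTheta θ x y :=
  tsum_nonneg fun i => by split_ifs <;> simp [hθ0]

theorem eq_of_dTheta_eq_zero (hθ0 : 0 < θ) (hθ1 : θ < 1) (x y : SigmaA N A)
    (h : dTheta θ x y = 0) : x = y := by
  have hterm := (summable_dTheta hθ0.le hθ1 x y).hasSum_iff.2 h
  rw [hasSum_zero_iff_of_nonneg fun i => by split_ifs <;> simp [hθ0.le]] at hterm
  exact Subtype.ext (funext fun i => by simpa [hθ0.ne'] using congrFun hterm i)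

theorem dTheta_le (hθ0 : 0 ≤ θ) (hθ1 : θ < 1) (x y : SigmaA N A) : dTheta θ x y ≤ (1 - θ)⁻¹ := by
  rw [← tsum_geometric_of_lt_one hθ0 hθ1]
  refine (summable_dTheta hθ0 hθ1 x y).tsum_le_tsum (fun i => ?_)
    (summable_geometric_of_lt_one hθ0 hθ1)
  split_ifs <;> simp [hθ0]

theorem continuous_dTheta (hθ0 : 0 ≤ θ) (hθ1 : θ < 1) (x : SigmaA N A) :
    Continuous fun y : SigmaA N A => dTheta θ x y := by
  refine continuous_tsum (u := fun i => θ ^ i) (fun i => ?_)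
    (summable_geometric_of_lt_one hθ0 hθ1) (fun i y => ?_)
  · have h : Continuous fun a : Fin N => θ ^ i * (if x.val i = a then (0 : ℝ) else 1) :=
      continuous_of_discreteTopology
    exact h.comp ((continuous_apply i).comp continuous_subtype_val)
  · split_ifs <;> simp [abs_of_nonneg hθ0, hθ0]

theorem LipD.continuous (hθ0 : 0 ≤ θ) (hθ1 : θ < 1) {f : SigmaA N A → ℝ}
    (hf : LipD (dTheta θ) f) : Continuous f := by
  obtain ⟨L, hL⟩ := hf
  refine continuous_iff_continuousAt.2 fun x => tendsto_iff_dist_tendsto_zero.2 <|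
    squeeze_zero (fun _ => dist_nonneg) (g := fun y => L * dTheta θ x y) (fun y => ?_) ?_
  · rw [dist_comm, Real.dist_eq]
    exact hL x y
  · simpa [dTheta] using ((continuous_dTheta hθ0 hθ1 x).const_mul L).tendsto x

theorem LipD.integrable (hθ0 : 0 ≤ θ) (hθ1 : θ < 1) {f : SigmaA N A → ℝ}
    (hf : LipD (dTheta θ) f) (m : Measure (SigmaA N A)) [IsFiniteMeasure m] : Integrable f m := by
  obtain ⟨C, hC⟩ := hf.bounded (dTheta_nonneg hθ0) (dTheta_le hθ0 hθ1)
  exact .of_bound (hf.continuous hθ0 hθ1).measurable.aestronglyMeasurable C (.of_forall hC)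

theorem measurable_shift : Measurable (shift : SigmaA N A → SigmaA N A) :=
  (measurable_pi_iff.2 fun i => (measurable_pi_apply (i + 1)).comp measurable_subtype_coe :
    Measurable fun (x : SigmaA N A) (i : ℕ) => x.val (i + 1)).subtype_mk

end SymbolicMetric

section PerronFrobenius

variable {X : Type*} [MeasurableSpace X] {m : Measure X} {T : X → X} {u v : X → ℝ}

/-- `u` is a version of the Perron–Frobenius image `P_T v` of `v` under the map `T` of the measure
space `(X, m)`. -/
structure IsPerronFrobeniusImage (m : Measure X) (T : X → X) (v u : X → ℝ) : Prop where
  integrable : Integrable u m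
  setIntegral_eq : ∀ ⦃S : Set X⦄, MeasurableSet S → ∫ x in S, u x ∂m = ∫ x in T ⁻¹' S, v x ∂m

theorem IsPerronFrobeniusImage.comp {T' : X → X} {w : X → ℝ}
    (hu : IsPerronFrobeniusImage m T v u) (hw : IsPerronFrobeniusImage m T' u w)
    (hT' : Measurable T') : IsPerronFrobeniusImage m (T' ∘ T) v w :=
  ⟨hw.integrable, fun S hS => by
    rw [hw.setIntegral_eq hS, hu.setIntegral_eq (hT' hS), preimage_comp]⟩

theorem IsPerronFrobeniusImage.congr {v' : X → ℝ} (hu : IsPerronFrobeniusImage m T v u)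
    (hv : v =ᵐ[m] v') : IsPerronFrobeniusImage m T v' u :=
  ⟨hu.integrable, fun S hS => by
    rw [hu.setIntegral_eq hS, integral_congr_ae (ae_restrict_of_ae hv)]⟩

theorem IsPerronFrobeniusImage.ae_eq {u' : X → ℝ} (hu : IsPerronFrobeniusImage m T v u)
    (hu' : IsPerronFrobeniusImage m T v u') : u =ᵐ[m] u' :=
  hu.integrable.ae_eq_of_forall_setIntegral_eq _ _ hu'.integrable fun S hS _ => by
    rw [hu.setIntegral_eq hS, hu'.setIntegral_eq hS]

theorem IsPerronFrobeniusImage.eLpNorm_top_le [IsFiniteMeasure m] (hT : MeasurePreserving T m m)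
    (hu : IsPerronFrobeniusImage m T v u) : eLpNorm u ∞ m ≤ eLpNorm v ∞ m := by
  rcases eq_or_ne (eLpNorm v ∞ m) ⊤ with htop | htop
  · exact le_top.trans_eq htop.symm
  set M := (eLpNorm v ∞ m).toReal
  have hv : ∀ᵐ x ∂m, ‖v x‖ ≤ M := by
    filter_upwards [ae_le_eLpNormEssSup (f := v) (μ := m)] with x hx
    rwa [← eLpNorm_exponent_top, ← ofReal_norm, ofReal_le_iff_le_toReal htop] at hx
  have hint (S : Set X) (hS : MeasurableSet S) : |∫ x in S, u x ∂m| ≤ M * m.real S := by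
    rw [hu.setIntegral_eq hS, ← hT.measureReal_preimage hS.nullMeasurableSet]
    exact norm_setIntegral_le_of_norm_le_const_ae (measure_lt_top m _) (ae_restrict_of_ae hv)
  have hle : u ≤ᵐ[m] fun _ => M :=
    ae_le_of_forall_setIntegral_le hu.integrable (integrable_const M) fun S hS _ => by
      simpa [mul_comm] using (abs_le.1 (hint S hS)).2
  have hge : (fun _ => -M) ≤ᵐ[m] u :=
    ae_le_of_forall_setIntegral_le (integrable_const (-M)) hu.integrable fun S hS _ => by
      simpa [mul_comm] using (abs_le.1 (hint S hS)).1
  rw [← ofReal_toReal htop, eLpNorm_exponent_top]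
  refine eLpNormEssSup_le_of_ae_bound ?_
  filter_upwards [hle, hge] with x h₁ h₂ using abs_le.2 ⟨h₂, h₁⟩

end PerronFrobenius

section BaseOperator

variable {m : Measure (SigmaA N A)} {Pσ : (SigmaA N A → ℝ) → SigmaA N A → ℝ}

theorem IsPerronFrobenius.isPerronFrobeniusImage (hPF : IsPerronFrobenius m Pσ)
    {φ : SigmaA N A → ℝ} (hφ : Integrable φ m) (hPφ : Integrable (Pσ φ) m) :
    IsPerronFrobeniusImage m shift φ (Pσ φ) := by
  refine ⟨hPφ, fun S hS => ?_⟩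
  have h := hPF φ (S.indicator 1) hφ (measurable_one.indicator hS)
    ⟨1, fun x => by by_cases hx : x ∈ S <;> simp [hx]⟩
  have hind (x : SigmaA N A) :
      S.indicator (1 : SigmaA N A → ℝ) (shift x) = (shift ⁻¹' S).indicator 1 x := rfl
  simp only [hind, ← indicator_mul_right, Pi.one_apply, mul_one] at h
  rwa [integral_indicator hS, integral_indicator (measurable_shift hS)] at h

theorem IsPerronFrobenius.iterate (hPF : IsPerronFrobenius m Pσ) {φ : SigmaA N A → ℝ}
    (hφ : ∀ n, Integrable (Pσ^[n] φ) m) (n : ℕ) :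
    IsPerronFrobeniusImage m shift^[n] φ (Pσ^[n] φ) := by
  induction n with
  | zero => exact ⟨hφ 0, fun S _ => rfl⟩
  | succ n ih =>
    have hstep := hPF.isPerronFrobeniusImage (hφ n)
      (by simpa only [← Function.iterate_succ_apply'] using hφ (n + 1))
    simpa only [← Function.iterate_succ', ← Function.iterate_succ_apply'] using
      ih.comp hstep measurable_shift

theorem HasLasotaYorke.exists_isPerronFrobeniusImage_thetaNorm_le [IsFiniteMeasure m] {θ C : ℝ}
    (hLY : HasLasotaYorke (dTheta θ) θ C Pσ) (hPF : IsPerronFrobenius m Pσ) (hθ0 : 0 < θ)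
    (hθ1 : θ < 1) {ψ : SigmaA N A → ℝ} (hψ : thetaNorm (dTheta θ) ψ ≠ ⊤) {n : ℕ} (hn : 1 ≤ n) :
    ∃ u, IsPerronFrobeniusImage m shift^[n] ψ u ∧
      thetaNorm (dTheta θ) u ≤
        ENNReal.ofReal (θ ^ n) * thetaNorm (dTheta θ) ψ + ENNReal.ofReal C * eLpNorm ψ ∞ m := by
  have hd := dTheta_nonneg (N := N) (A := A) hθ0.le
  have hd0 := eq_of_dTheta_eq_zero (N := N) (A := A) hθ0 hθ1
  -- Truncating `ψ` at its essential supremum turns `‖ψ‖_{L^∞}` into a genuine supremum.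
  obtain ⟨ψ', hae, hnorm, hsup⟩ := exists_ae_eq_supNormE_le_eLpNorm_top m hd ψ
  have hlip : LipD (dTheta θ) ψ' :=
    .of_lipConst_ne_top hd hd0 (ne_top_of_le_ne_top hψ (le_add_self.trans hnorm))
  have hint (k : ℕ) : Integrable (Pσ^[k] ψ') m :=
    (hLY.lipD_iterate hd hd0 (dTheta_le hθ0.le hθ1) hlip k).integrable hθ0.le hθ1 m
  refine ⟨Pσ^[n] ψ', (hPF.iterate hint n).congr hae, (hLY ψ' hlip n hn).trans ?_⟩
  gcongr

end BaseOperator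

section SignedMeasures

variable {X Y : Type*} [MeasurableSpace X] [MeasurableSpace Y] {μ : SignedMeasure X}

instance isFiniteMeasure_jPos : IsFiniteMeasure (jPos μ) :=
  inferInstanceAs (IsFiniteMeasure μ.toJordanDecomposition.posPart)

instance isFiniteMeasure_jNeg : IsFiniteMeasure (jNeg μ) :=
  inferInstanceAs (IsFiniteMeasure μ.toJordanDecomposition.negPart)

theorem signedMeasure_setIntegral_eq_sub {f : X → ℝ} (hf : Integrable f μ.totalVariation)
    {S : Set X} (hS : MeasurableSet S) :
    ∫ᵛ x in S, f x ∂<•μ = ∫ x in S, f x ∂(jPos μ) - ∫ x in S, f x ∂(jNeg μ) := by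
  have hpos : Integrable (S.indicator f) (jPos μ) := hf.left_of_add_measure.indicator hS
  have hneg : Integrable (S.indicator f) (jNeg μ) := hf.right_of_add_measure.indicator hS
  have hμ : μ = (jPos μ).toSignedMeasure - (jNeg μ).toSignedMeasure :=
    μ.toSignedMeasure_toJordanDecomposition.symm
  rw [← VectorMeasure.integral_indicator hS, hμ,
    VectorMeasure.integral_sub_vectorMeasure (by simpa [VectorMeasure.Integrable])
      (by simpa [VectorMeasure.Integrable]), ← hμ]
  simp only [VectorMeasure.integral_toSignedMeasure, integral_indicator hS]

theorem totalVariation_map_le {Φ : X → Y} :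
    SignedMeasure.totalVariation (μ.map Φ) ≤ μ.totalVariation.map Φ := by
  simp only [SignedMeasure.totalVariation_eq_variation]
  exact VectorMeasure.variation_map_le

end SignedMeasures

section Fibers

variable {m : Measure (SigmaA N A)}

omit [MetricSpace K] [BorelSpace K] [CompactSpace K] [Nonempty K] in
theorem memAB_iff_totalVariation_fst_absolutelyContinuous {μ : SignedMeasure (SigmaA N A × K)} :
    MemAB m μ ↔ μ.totalVariation.fst ≪ m := by
  have hfst : μ.totalVariation.fst = (jPos μ).fst + (jNeg μ).fst := Measure.fst_add
  rw [hfst, Measure.AbsolutelyContinuous.add_left_iff]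
  exact ⟨fun h => ⟨h.1, h.2.1⟩, fun h => ⟨h.1, h.2, inferInstance, inferInstance⟩⟩

omit [MetricSpace K] [BorelSpace K] [CompactSpace K] [Nonempty K] in
theorem MemAB.map {μ : SignedMeasure (SigmaA N A × K)} (hμ : MemAB m μ)
    {Φ : SigmaA N A × K → SigmaA N A × K} {τ : SigmaA N A → SigmaA N A} (hΦ : Measurable Φ)
    (hΦτ : Function.Semiconj Prod.fst Φ τ) (hτ : Measure.QuasiMeasurePreserving τ m m) :
    MemAB m (μ.map Φ) := by
  rw [memAB_iff_totalVariation_fst_absolutelyContinuous] at hμ ⊢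
  have hfst : (μ.totalVariation.map Φ).fst = μ.totalVariation.fst.map τ := by
    simp only [Measure.fst, Measure.map_map measurable_fst hΦ,
      Measure.map_map hτ.measurable measurable_fst, hΦτ.comp_eq]
  have hle : (SignedMeasure.totalVariation (μ.map Φ)).fst ≪ μ.totalVariation.fst.map τ :=
    hfst ▸ Measure.absolutelyContinuous_of_le (Measure.fst_mono totalVariation_map_le)
  exact (hle.trans (hμ.map hτ.measurable)).trans hτ.absolutelyContinuous

theorem fiberR_eq {ν : Measure (SigmaA N A × K)} [IsFiniteMeasure ν] (γ : SigmaA N A) :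
    fiberR m ν γ = ν.fst.rnDeriv m γ • ν.condKernel γ :=
  dif_pos ‹IsFiniteMeasure ν›

theorem measureReal_fiberR_univ {ν : Measure (SigmaA N A × K)} [IsFiniteMeasure ν]
    (γ : SigmaA N A) : (fiberR m ν γ).real univ = (ν.fst.rnDeriv m γ).toReal := by
  simp [fiberR_eq, Measure.real]

theorem ae_isFiniteMeasure_fiberR [SigmaFinite m] (ν : Measure (SigmaA N A × K))
    [IsFiniteMeasure ν] : ∀ᵐ γ ∂m, IsFiniteMeasure (fiberR m ν γ) := by
  filter_upwards [Measure.rnDeriv_lt_top ν.fst m] with γ hγ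
  rw [fiberR_eq]
  exact Measure.smul_finite _ hγ.ne

theorem integrable_integral_fiberR [SigmaFinite m] {ν : Measure (SigmaA N A × K)}
    [IsFiniteMeasure ν] (hν : ν.fst ≪ m) {f : SigmaA N A × K → ℝ} (hf : Integrable f ν) :
    Integrable (fun γ => ∫ z, f (γ, z) ∂fiberR m ν γ) m := by
  simp only [fiberR_eq, integral_smul_measure]
  exact (integrable_rnDeriv_smul_iff hν).2 hf.integral_condKernel

theorem setIntegral_integral_fiberR [SigmaFinite m] {ν : Measure (SigmaA N A × K)}
    [IsFiniteMeasure ν] (hν : ν.fst ≪ m) {f : SigmaA N A × K → ℝ} (hf : Integrable f ν)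
    {S : Set (SigmaA N A)} (hS : MeasurableSet S) :
    ∫ γ in S, ∫ z, f (γ, z) ∂fiberR m ν γ ∂m = ∫ p in S ×ˢ univ, f p ∂ν := by
  simp only [fiberR_eq, integral_smul_measure]
  rw [setIntegral_rnDeriv_smul hν hS, Measure.setIntegral_condKernel_univ_right hS hf.integrableOn]

/-- The function `γ ↦ ∫ f(γ, z) dμ|_γ(z)`, where the restriction `μ|_γ` of the signed measure `μ` to
the fiber over `γ` is the difference of the restrictions of `jPos μ` and `jNeg μ`. -/
noncomputable def fiberIntegral (m : Measure (SigmaA N A)) (μ : SignedMeasure (SigmaA N A × K))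
    (f : SigmaA N A × K → ℝ) (γ : SigmaA N A) : ℝ :=
  ∫ z, f (γ, z) ∂fiberR m (jPos μ) γ - ∫ z, f (γ, z) ∂fiberR m (jNeg μ) γ

variable {μ : SignedMeasure (SigmaA N A × K)}

theorem phiPair_eq_measureReal_sub (γ : SigmaA N A) : phiPair m (jPos μ) (jNeg μ) γ =
    (fiberR m (jPos μ) γ).real univ - (fiberR m (jNeg μ) γ).real univ := by
  simp only [phiPair, measureReal_fiberR_univ]

theorem fiberIntegral_one : fiberIntegral m μ (fun _ => 1) = phiPair m (jPos μ) (jNeg μ) := by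
  ext γ
  simp [fiberIntegral, phiPair_eq_measureReal_sub]

omit [MetricSpace K] [BorelSpace K] [CompactSpace K] [Nonempty K] in
theorem phiSup_eq_eLpNorm_top : phiSup m μ = eLpNorm (phiPair m (jPos μ) (jNeg μ)) ∞ m := by
  simp only [phiSup, eLpNorm_exponent_top, eLpNormEssSup, Real.enorm_eq_ofReal_abs]

theorem MemAB.integrable_fiberIntegral [SigmaFinite m] (hμ : MemAB m μ)
    {f : SigmaA N A × K → ℝ} (hf : Integrable f μ.totalVariation) :
    Integrable (fiberIntegral m μ f) m :=
  (integrable_integral_fiberR hμ.1 hf.left_of_add_measure).sub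
    (integrable_integral_fiberR hμ.2.1 hf.right_of_add_measure)

theorem MemAB.setIntegral_fiberIntegral [SigmaFinite m] (hμ : MemAB m μ)
    {f : SigmaA N A × K → ℝ} (hf : Integrable f μ.totalVariation) {S : Set (SigmaA N A)}
    (hS : MeasurableSet S) :
    ∫ γ in S, fiberIntegral m μ f γ ∂m = ∫ᵛ p in S ×ˢ univ, f p ∂<•μ := by
  have hpos : Integrable f (jPos μ) := hf.left_of_add_measure
  have hneg : Integrable f (jNeg μ) := hf.right_of_add_measure
  rw [signedMeasure_setIntegral_eq_sub hf (hS.prod .univ),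
    ← setIntegral_integral_fiberR hμ.1 hpos hS, ← setIntegral_integral_fiberR hμ.2.1 hneg hS]
  exact integral_sub (integrable_integral_fiberR hμ.1 hpos).integrableOn
    (integrable_integral_fiberR hμ.2.1 hneg).integrableOn

theorem MemAB.isPerronFrobeniusImage_fiberIntegral_map [SigmaFinite m] (hμ : MemAB m μ)
    {Φ : SigmaA N A × K → SigmaA N A × K} {τ : SigmaA N A → SigmaA N A} (hΦ : Measurable Φ)
    (hΦτ : Function.Semiconj Prod.fst Φ τ) (hτ : Measure.QuasiMeasurePreserving τ m m)
    {f : SigmaA N A × K → ℝ} (hf : Measurable f) (hfΦ : Integrable (f ∘ Φ) μ.totalVariation) :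
    IsPerronFrobeniusImage m τ (fiberIntegral m μ (f ∘ Φ)) (fiberIntegral m (μ.map Φ) f) := by
  have hμΦ : MemAB m (μ.map Φ) := hμ.map hΦ hΦτ hτ
  have hfmap : Integrable f (SignedMeasure.totalVariation (μ.map Φ)) :=
    ((integrable_map_measure hf.aestronglyMeasurable hΦ.aemeasurable).2 hfΦ).mono_measure
      totalVariation_map_le
  refine ⟨hμΦ.integrable_fiberIntegral hfmap, fun S hS => ?_⟩
  have hpre : Φ ⁻¹' (S ×ˢ univ) = (τ ⁻¹' S) ×ˢ univ := by
    ext p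
    simp [hΦτ.eq]
  rw [hμΦ.setIntegral_fiberIntegral hfmap hS, hμ.setIntegral_fiberIntegral hfΦ (hτ.measurable hS),
    VectorMeasure.setIntegral_map hΦ (hS.prod .univ) hf.aestronglyMeasurable
      (by rwa [VectorMeasure.Integrable, ← SignedMeasure.totalVariation_eq_variation]), hpre]
  rfl

end Fibers

section WassersteinNorm

section Measures

variable {Z : Type*} [MetricSpace Z] [MeasurableSpace Z]

theorem enorm_integral_sub_integral_le_mul_wDist (ν₁ ν₂ : Measure Z) {c : ℝ≥0} {k : Z → ℝ}
    (hk : LipschitzWith c k) (hkc : ∀ z, |k z| ≤ c) :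
    ‖∫ z, k z ∂ν₁ - ∫ z, k z ∂ν₂‖ₑ ≤ c * wDist ν₁ ν₂ := by
  rcases eq_or_ne c 0 with rfl | hc
  · have hk0 : k = 0 := funext fun z => by simpa using hkc z
    simp [hk0]
  set g : Z → ℝ := fun z => (c : ℝ)⁻¹ * k z
  have hg : LipschitzWith 1 g := .of_dist_le_mul fun z w => by
    have h := hk.dist_le_mul z w
    rw [Real.dist_eq, ← mul_sub, abs_mul, abs_inv, NNReal.abs_eq, inv_mul_le_iff₀ (by positivity)]
    simpa [Real.dist_eq] using h
  have hg1 (z : Z) : |g z| ≤ 1 := by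
    rw [abs_mul, abs_inv, NNReal.abs_eq, inv_mul_le_iff₀ (by positivity), mul_one]
    exact hkc z
  have hkg : k = fun z => c * g z := funext fun z => by
    simp [g, mul_inv_cancel_left₀ (NNReal.coe_ne_zero.2 hc)]
  calc ‖∫ z, k z ∂ν₁ - ∫ z, k z ∂ν₂‖ₑ
    _ = c * ENNReal.ofReal |∫ z, g z ∂ν₁ - ∫ z, g z ∂ν₂| := by
      simp only [hkg, integral_const_mul, ← mul_sub, enorm_mul, Real.enorm_eq_ofReal_abs]
      simp
    _ ≤ c * wDist ν₁ ν₂ := by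
      gcongr
      exact le_iSup (fun g : {g : Z → ℝ // LipschitzWith 1 g ∧ ∀ z, |g z| ≤ 1} =>
        ENNReal.ofReal |∫ z, g.val z ∂ν₁ - ∫ z, g.val z ∂ν₂|) ⟨g, hg, hg1⟩

theorem enorm_measureReal_univ_sub_le_wDist (ν₁ ν₂ : Measure Z) :
    ‖ν₁.real univ - ν₂.real univ‖ₑ ≤ wDist ν₁ ν₂ := by
  simpa using enorm_integral_sub_integral_le_mul_wDist ν₁ ν₂ (c := 1)
    ((LipschitzWith.const (1 : ℝ)).weaken zero_le_one) (by simp)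

variable [BorelSpace Z] [CompactSpace Z]

theorem enorm_integral_sub_integral_le_mul_wDist_add (hdiam : Metric.diam (univ : Set Z) ≤ 1)
    (ν₁ ν₂ : Measure Z) [IsFiniteMeasure ν₁] [IsFiniteMeasure ν₂] {c : ℝ≥0} {f : Z → ℝ}
    (hf : LipschitzWith c f) (hf1 : ∀ z, |f z| ≤ 1) :
    ‖∫ z, f z ∂ν₁ - ∫ z, f z ∂ν₂‖ₑ ≤ c * wDist ν₁ ν₂ + ‖ν₁.real univ - ν₂.real univ‖ₑ := by
  rcases isEmpty_or_nonempty Z with hZ | ⟨⟨z₀⟩⟩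
  · simp [Measure.eq_zero_of_isEmpty]
  set k : Z → ℝ := fun z => f z - f z₀
  have hk : LipschitzWith c k := by simpa using hf.sub (LipschitzWith.const (f z₀))
  have hkc (z : Z) : |k z| ≤ c := by
    have hzz₀ : dist z z₀ ≤ 1 :=
      (Metric.dist_le_diam_of_mem isCompact_univ.isBounded (mem_univ z) (mem_univ z₀)).trans hdiam
    exact (hf.dist_le_mul z z₀).trans (mul_le_of_le_one_right c.2 hzz₀)
  have hsplit (ν : Measure Z) [IsFiniteMeasure ν] :
      ∫ z, f z ∂ν = ∫ z, k z ∂ν + ν.real univ * f z₀ := by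
    have hfν : Integrable f ν := .of_bound hf.continuous.aestronglyMeasurable 1 (.of_forall hf1)
    simp [k, integral_sub hfν (integrable_const _)]
  calc ‖∫ z, f z ∂ν₁ - ∫ z, f z ∂ν₂‖ₑ
    _ = ‖(∫ z, k z ∂ν₁ - ∫ z, k z ∂ν₂) + (ν₁.real univ - ν₂.real univ) * f z₀‖ₑ := by
      rw [hsplit ν₁, hsplit ν₂]
      ring_nf
    _ ≤ ‖∫ z, k z ∂ν₁ - ∫ z, k z ∂ν₂‖ₑ + ‖ν₁.real univ - ν₂.real univ‖ₑ * ‖f z₀‖ₑ := by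
      rw [← enorm_mul]
      exact enorm_add_le _ _
    _ ≤ c * wDist ν₁ ν₂ + ‖ν₁.real univ - ν₂.real univ‖ₑ := by
      refine add_le_add (enorm_integral_sub_integral_le_mul_wDist ν₁ ν₂ hk hkc)
        (mul_le_of_le_one_right' ?_)
      simpa [Real.enorm_eq_ofReal_abs] using hf1 z₀

theorem continuous_integral_continuousMap (ν : Measure Z) [IsFiniteMeasure ν] :
    Continuous fun g : C(Z, ℝ) => ∫ z, g z ∂ν := by
  refine (continuous_integral.comp (ContinuousMap.toLp 1 ν ℝ).continuous).congr fun g => ?_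
  exact integral_congr_ae (ContinuousMap.coeFn_toLp ν g)

theorem exists_countable_forall_wDist_le (Z : Type*) [MetricSpace Z] [MeasurableSpace Z]
    [BorelSpace Z] [CompactSpace Z] :
    ∃ s : Set C(Z, ℝ), s.Countable ∧ (∀ g ∈ s, LipschitzWith 1 g ∧ ∀ z, |g z| ≤ 1) ∧
      ∀ (ν₁ ν₂ : Measure Z) [IsFiniteMeasure ν₁] [IsFiniteMeasure ν₂] (B : ℝ≥0∞),
        (∀ g ∈ s, ‖∫ z, g z ∂ν₁ - ∫ z, g z ∂ν₂‖ₑ ≤ B) → wDist ν₁ ν₂ ≤ B := by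
  obtain ⟨s, hsub, hcount, hdense⟩ := (TopologicalSpace.IsSeparable.of_separableSpace
    {g : C(Z, ℝ) | LipschitzWith 1 g ∧ ∀ z, |g z| ≤ 1}).exists_countable_dense_subset
  refine ⟨s, hcount, fun g hg => hsub hg, fun ν₁ ν₂ _ _ B hB => iSup_le fun g => ?_⟩
  have hclosed : IsClosed {g : C(Z, ℝ) | ‖∫ z, g z ∂ν₁ - ∫ z, g z ∂ν₂‖ₑ ≤ B} :=
    isClosed_le ((continuous_integral_continuousMap ν₁).sub
      (continuous_integral_continuousMap ν₂)).enorm continuous_const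
  rw [← Real.enorm_eq_ofReal_abs]
  exact closure_minimal hB hclosed (hdense (a := ⟨g.val, g.prop.1.continuous⟩) g.prop)

end Measures

variable {m : Measure (SigmaA N A)} {μ : SignedMeasure (SigmaA N A × K)}

theorem phiSup_le_infNorm : phiSup m μ ≤ infNorm m μ :=
  essSup_mono_ae <| .of_forall fun γ => by
    simp only [← Real.enorm_eq_ofReal_abs, phiPair_eq_measureReal_sub]
    exact enorm_measureReal_univ_sub_le_wDist _ _

theorem infNorm_le_of_forall_eLpNorm_top_fiberIntegral_le [SigmaFinite m] {B : ℝ≥0∞}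
    (h : ∀ g : K → ℝ, LipschitzWith 1 g → (∀ z, |g z| ≤ 1) →
      eLpNorm (fiberIntegral m μ (g ∘ Prod.snd)) ∞ m ≤ B) : infNorm m μ ≤ B := by
  obtain ⟨s, hcount, hs, hwDist⟩ := exists_countable_forall_wDist_le K
  have hae : ∀ᵐ γ ∂m, ∀ g ∈ s, ‖fiberIntegral m μ (g ∘ Prod.snd) γ‖ₑ ≤ B :=
    (ae_ball_iff hcount).2 fun g hg => by
      filter_upwards [ae_le_eLpNormEssSup (f := fiberIntegral m μ (g ∘ Prod.snd)) (μ := m)]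
        with γ hγ
      exact hγ.trans (h g (hs g hg).1 (hs g hg).2)
  refine essSup_le_of_ae_le B ?_
  filter_upwards [hae, ae_isFiniteMeasure_fiberR (jPos μ), ae_isFiniteMeasure_fiberR (jNeg μ)]
    with γ hγ _ _ using hwDist _ _ B hγ

theorem eLpNorm_top_fiberIntegral_le [SigmaFinite m] (hdiam : Metric.diam (univ : Set K) ≤ 1)
    {c : ℝ≥0} {f : SigmaA N A × K → ℝ} (hf : ∀ γ, LipschitzWith c fun z => f (γ, z))
    (hf1 : ∀ p, |f p| ≤ 1) :
    eLpNorm (fiberIntegral m μ f) ∞ m ≤ c * infNorm m μ + phiSup m μ := by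
  rw [phiSup_eq_eLpNorm_top]
  refine essSup_le_of_ae_le _ ?_
  filter_upwards [ae_isFiniteMeasure_fiberR (jPos μ), ae_isFiniteMeasure_fiberR (jNeg μ),
    ae_le_eLpNormEssSup (f := phiPair m (jPos μ) (jNeg μ)) (μ := m),
    ae_le_essSup fun γ => wDist (fiberR m (jPos μ) γ) (fiberR m (jNeg μ) γ)] with γ _ _ hphi hW
  refine (enorm_integral_sub_integral_le_mul_wDist_add hdiam _ _ (hf γ) fun z => hf1 (γ, z)).trans
    (add_le_add (mul_le_mul_right hW _) ?_)
  rwa [← phiPair_eq_measureReal_sub]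

theorem MemAB.infNorm_map_le [IsFiniteMeasure m] (hμ : MemAB m μ)
    (hdiam : Metric.diam (univ : Set K) ≤ 1) {Φ : SigmaA N A × K → SigmaA N A × K}
    {τ : SigmaA N A → SigmaA N A} (hΦ : Measurable Φ) (hΦτ : Function.Semiconj Prod.fst Φ τ)
    (hτ : MeasurePreserving τ m m) {c : ℝ≥0} (hc : ∀ γ, LipschitzWith c fun z => (Φ (γ, z)).2) :
    infNorm m (μ.map Φ) ≤ c * infNorm m μ + phiSup m μ := by
  refine infNorm_le_of_forall_eLpNorm_top_fiberIntegral_le fun g hg hg1 => ?_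
  have hgm : Measurable (g ∘ Prod.snd : SigmaA N A × K → ℝ) :=
    hg.continuous.measurable.comp measurable_snd
  have hint : Integrable ((g ∘ Prod.snd) ∘ Φ) μ.totalVariation :=
    .of_bound (hgm.comp hΦ).aestronglyMeasurable 1 (.of_forall fun p => hg1 (Φ p).2)
  have himage :=
    hμ.isPerronFrobeniusImage_fiberIntegral_map hΦ hΦτ hτ.quasiMeasurePreserving hgm hint
  refine (himage.eLpNorm_top_le hτ).trans (eLpNorm_top_fiberIntegral_le hdiam (fun γ => ?_)
    fun p => hg1 (Φ p).2)
  simpa [Function.comp_def] using hg.comp (hc γ)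

end WassersteinNorm

section SkewProduct

variable {G : SigmaA N A × K → K}

omit [MetricSpace K] [MeasurableSpace K] [BorelSpace K] [CompactSpace K] [Nonempty K] in
theorem semiconj_fst_skew : Function.Semiconj Prod.fst (skew G) shift := fun _ => rfl

omit [MeasurableSpace K] [BorelSpace K] [CompactSpace K] [Nonempty K] in
theorem CondG1.lipschitzWith_iterate_skew {α : ℝ} (hG1 : CondG1 G α) (n : ℕ) (x : SigmaA N A) :
    LipschitzWith (α.toNNReal ^ n) fun z => ((skew G)^[n] (x, z)).2 := by
  induction n with
  | zero => exact LipschitzWith.id.weaken (pow_zero _).ge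
  | succ n ih =>
    have hstep : LipschitzWith α.toNNReal fun z => G (shift^[n] x, z) :=
      .of_dist_le_mul fun z w => (hG1 _ z w).trans
        (mul_le_mul_of_nonneg_right (Real.le_coe_toNNReal α) dist_nonneg)
    have hfst (z : K) : ((skew G)^[n] (x, z)).1 = shift^[n] x :=
      semiconj_fst_skew.iterate_right n (x, z)
    have heq : (fun z => ((skew G)^[n + 1] (x, z)).2) =
        (fun z => G (shift^[n] x, z)) ∘ fun z => ((skew G)^[n] (x, z)).2 := by
      ext z
      simp only [Function.iterate_succ_apply', skew, Function.comp_apply, ← hfst z]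
    rw [heq, pow_succ']
    exact hstep.comp ih

omit [MetricSpace K] [BorelSpace K] [CompactSpace K] [Nonempty K] in
theorem transfer_iterate (hG : Measurable (skew G)) (n : ℕ)
    (μ : SignedMeasure (SigmaA N A × K)) : (transfer G)^[n] μ = μ.map (skew G)^[n] := by
  induction n with
  | zero => simp
  | succ n ih =>
    rw [Function.iterate_succ_apply', ih, transfer]
    ext E hE
    rw [VectorMeasure.map_apply _ hG hE, VectorMeasure.map_apply _ (hG.iterate n) (hG hE),
      VectorMeasure.map_apply _ (hG.iterate (n + 1)) hE, Function.iterate_succ', preimage_comp]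

variable {m : Measure (SigmaA N A)} [IsFiniteMeasure m] {μ : SignedMeasure (SigmaA N A × K)}
  {θ α C₂ : ℝ} {Pσ : (SigmaA N A → ℝ) → SigmaA N A → ℝ}

theorem MemAB.infNorm_transfer_iterate_le (hμ : MemAB m μ)
    (hdiam : Metric.diam (univ : Set K) ≤ 1) (hG : Measurable (skew G))
    (hσ : MeasurePreserving shift m m) (hG1 : CondG1 G α) (n : ℕ) :
    infNorm m ((transfer G)^[n] μ) ≤ ENNReal.ofReal α ^ n * infNorm m μ + phiSup m μ := by
  rw [transfer_iterate hG]
  exact_mod_cast hμ.infNorm_map_le hdiam (hG.iterate n) (semiconj_fst_skew.iterate_right n)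
    (hσ.iterate n) (hG1.lipschitzWith_iterate_skew n)

theorem MemAB.isPerronFrobeniusImage_phiPair_transfer_iterate (hμ : MemAB m μ)
    (hG : Measurable (skew G)) (hσ : MeasurePreserving shift m m) (n : ℕ) :
    IsPerronFrobeniusImage m shift^[n] (phiPair m (jPos μ) (jNeg μ))
      (phiPair m (jPos ((transfer G)^[n] μ)) (jNeg ((transfer G)^[n] μ))) := by
  have : IsFiniteMeasure μ.totalVariation := inferInstanceAs (IsFiniteMeasure (jPos μ + jNeg μ))
  rw [transfer_iterate hG, ← fiberIntegral_one, ← fiberIntegral_one]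
  exact hμ.isPerronFrobeniusImage_fiberIntegral_map (hG.iterate n)
    (semiconj_fst_skew.iterate_right n) (hσ.iterate n).quasiMeasurePreserving measurable_const
    (integrable_const 1)

theorem MemAB.thetaNormMu_transfer_iterate_le (hμ : MemAB m μ) (hG : Measurable (skew G))
    (hσ : MeasurePreserving shift m m) (hθ0 : 0 < θ) (hθ1 : θ < 1) (hPF : IsPerronFrobenius m Pσ)
    (hLY : HasLasotaYorke (dTheta θ) θ C₂ Pσ) {n : ℕ} (hn : 1 ≤ n) :
    thetaNormMu m θ (jPos ((transfer G)^[n] μ)) (jNeg ((transfer G)^[n] μ)) ≤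
      ENNReal.ofReal (θ ^ n) * thetaNormMu m θ (jPos μ) (jNeg μ) +
        ENNReal.ofReal C₂ * phiSup m μ := by
  have hθn : ENNReal.ofReal (θ ^ n) ≠ 0 := (ofReal_pos.2 (pow_pos hθ0 n)).ne'
  conv_rhs => rw [thetaNormMu, mul_iInf_of_ne hθn ofReal_ne_top, iInf_add]
  refine le_iInf fun ⟨ψ, hψ⟩ => ?_
  rcases eq_or_ne (thetaNorm (dTheta θ) ψ) ⊤ with htop | htop
  · rw [htop, mul_top hθn, top_add]
    exact le_top
  obtain ⟨u, hu, hbound⟩ := hLY.exists_isPerronFrobeniusImage_thetaNorm_le hPF hθ0 hθ1 htop hn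
  have hu_ae : u =ᵐ[m] phiPair m (jPos ((transfer G)^[n] μ)) (jNeg ((transfer G)^[n] μ)) :=
    (hu.congr hψ).ae_eq (hμ.isPerronFrobeniusImage_phiPair_transfer_iterate hG hσ n)
  rw [phiSup_eq_eLpNorm_top, ← eLpNorm_congr_ae hψ]
  exact (iInf_le _ ⟨u, hu_ae⟩).trans hbound

theorem transfer_LasotaYorke_Sinfty_general (hθ0 : 0 < θ) (hθ1 : θ < 1)
    (hσ : MeasurePreserving shift m m) (hdiam : Metric.diam (univ : Set K) ≤ 1)
    (hG : Measurable (skew G)) (hG1 : CondG1 G α) (hPF : IsPerronFrobenius m Pσ)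
    (hLY : HasLasotaYorke (dTheta θ) θ C₂ Pσ) (hμ : MemAB m μ) {n : ℕ} (hn : 1 ≤ n) :
    sNorm m θ ((transfer G)^[n] μ) ≤
      ENNReal.ofReal (max θ α ^ n) * sNorm m θ μ + (ENNReal.ofReal C₂ + 1) * phiSup m μ := by
  have hθ : ENNReal.ofReal (θ ^ n) ≤ ENNReal.ofReal (max θ α ^ n) := by
    gcongr
    exact le_max_left θ α
  have hα : ENNReal.ofReal α ^ n ≤ ENNReal.ofReal (max θ α ^ n) := by
    rw [ofReal_pow (hθ0.le.trans (le_max_left θ α))]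
    gcongr
    exact le_max_right θ α
  calc sNorm m θ ((transfer G)^[n] μ)
    _ ≤ (ENNReal.ofReal (θ ^ n) * thetaNormMu m θ (jPos μ) (jNeg μ) +
          ENNReal.ofReal C₂ * phiSup m μ) +
        (ENNReal.ofReal α ^ n * infNorm m μ + phiSup m μ) :=
      add_le_add (hμ.thetaNormMu_transfer_iterate_le hG hσ hθ0 hθ1 hPF hLY hn)
        (hμ.infNorm_transfer_iterate_le hdiam hG hσ hG1 n)
    _ ≤ (ENNReal.ofReal (max θ α ^ n) * thetaNormMu m θ (jPos μ) (jNeg μ) +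
          ENNReal.ofReal C₂ * phiSup m μ) +
        (ENNReal.ofReal (max θ α ^ n) * infNorm m μ + phiSup m μ) := by gcongr
    _ = ENNReal.ofReal (max θ α ^ n) * sNorm m θ μ + (ENNReal.ofReal C₂ + 1) * phiSup m μ := by
      rw [sNorm, sNormPair, infNorm]
      ring

end SkewProduct

/-- **Lasota–Yorke inequality for `S^∞`.**
With `α₁ = max{θ, α}` and `B₄ = C₂ + 1/(1-α)`, for every `μ ∈ S^∞` and
`n ≥ 1`, `‖F^{*n}μ‖_{S^∞} ≤ 2 α₁^n ‖μ‖_{S^∞} + B₄ ‖μ‖_∞`. -/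
theorem transfer_LasotaYorke_Sinfty
    (N : ℕ) (A : Fin N → Fin N → Bool) (hA : Aperiodic A)
    (θ : ℝ) (hθ0 : 0 < θ) (hθ1 : θ < 1)
    (m : Measure (SigmaA N A)) [IsProbabilityMeasure m]
    (hmM : IsMarkov m) (hminv : m.map shift = m)
    {K : Type*} [MetricSpace K] [CompactSpace K] [Nonempty K]
    [MeasurableSpace K] [BorelSpace K]
    (hdiam : Metric.diam (Set.univ : Set K) = 1)
    (G : SigmaA N A × K → K) (hGm : Measurable (skew G))
    (α : ℝ) (hα0 : 0 < α) (hα1 : α < 1) (hG1 : CondG1 G α)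
    (Pσ : (SigmaA N A → ℝ) → SigmaA N A → ℝ) (hPF : IsPerronFrobenius m Pσ)
    (C₂ : ℝ) (hC₂ : 0 < C₂)
    (hLY : ∀ φ : SigmaA N A → ℝ, LipD (dTheta θ) φ → ∀ n : ℕ, 1 ≤ n →
      thetaNorm (dTheta θ) (Pσ^[n] φ) ≤
        ENNReal.ofReal (θ ^ n) * thetaNorm (dTheta θ) φ +
          ENNReal.ofReal C₂ * supNormE φ) :
    ∀ μ : SignedMeasure (SigmaA N A × K), MemS m θ μ → ∀ n : ℕ, 1 ≤ n →
      sNorm m θ ((transfer G)^[n] μ) ≤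
        ENNReal.ofReal (2 * max θ α ^ n) * sNorm m θ μ +
          ENNReal.ofReal (C₂ + 1 / (1 - α)) * infNorm m μ := by
  intro μ hμ n hn
  have hα : 0 < 1 - α := sub_pos.2 hα1
  have hσ : MeasurePreserving shift m m := ⟨measurable_shift, hminv⟩
  have hmax : 0 ≤ max θ α ^ n := pow_nonneg (hθ0.le.trans (le_max_left θ α)) n
  have hB₄ : ENNReal.ofReal C₂ + 1 ≤ ENNReal.ofReal (C₂ + 1 / (1 - α)) := by
    rw [ofReal_add hC₂.le (by positivity), ← ofReal_one]
    gcongr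
    exact one_le_one_div hα (by linarith)
  refine (transfer_LasotaYorke_Sinfty_general hθ0 hθ1 hσ hdiam.le hGm hG1 hPF hLY hμ.1 hn).trans ?_
  gcongr
  · linarith
  · exact phiSup_le_infNorm

end RDS
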